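/- Let n be a positive integer, α a type with decidable equality, and f : Fin n → α. Let C = n - |image f| be the number of collisions of f, and let T be the number of indices i : Fin n such that the value f(i) is attained at least twice (the number of tied observations). If C ≥ 1, then C + 1 ≤ T ≤ 2·C; moreover C = 0 implies T = 0. -/

import Mathlib

/-!
Let `k` be the number of values attained at least twice. An untied index accounts for exactly one
value, so the collisions arise among the tied indices alone: `C = T - k`. Each of the `k` values is
attained by at least two tied indices, so `2 * k ≤ T = C + k`, i.e. `k ≤ C` and `T = C + k ≤ 2 * C`.
If `C ≥ 1` then `T ≥ 1`, so some value is tied, `k ≥ 1` and `T = C + k ≥ C + 1`.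
-/

open Finset

section Ties

variable {ι α : Type*} [DecidableEq α]

/-- The number of collisions of `f` on `s`, i.e. of duplicated values. The truncated subtraction
is exact, since an image has at most as many elements as `s`. -/
def collisionCount (s : Finset ι) (f : ι → α) : ℕ :=
  #s - #(s.image f)

variable [DecidableEq ι]

/-- The tied indices of `f` on `s`: those whose value is attained at another index of `s`. All
members of a group of equal values belong to it, so that two equal numbers make two ties. -/
def tiedIndices (s : Finset ι) (f : ι → α) : Finset ι :=
  {i ∈ s | ∃ j ∈ s, j ≠ i ∧ f j = f i}

variable {s : Finset ι} {f : ι → α} {i j : ι}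

theorem mem_tiedIndices : i ∈ tiedIndices s f ↔ i ∈ s ∧ ∃ j ∈ s, j ≠ i ∧ f j = f i :=
  mem_filter

theorem tiedIndices_subset (s : Finset ι) (f : ι → α) : tiedIndices s f ⊆ s :=
  filter_subset _ _

theorem eq_of_apply_eq_of_mem_sdiff_tiedIndices (hi : i ∈ s \ tiedIndices s f) (hj : j ∈ s)
    (h : f i = f j) : i = j := by
  obtain ⟨his, hi⟩ := mem_sdiff.mp hi
  by_contra hne
  exact hi (mem_tiedIndices.mpr ⟨his, j, hj, Ne.symm hne, h.symm⟩)

theorem injOn_sdiff_tiedIndices (s : Finset ι) (f : ι → α) :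
    Set.InjOn f (s \ tiedIndices s f : Finset ι) := fun _ hi _ hj h =>
  eq_of_apply_eq_of_mem_sdiff_tiedIndices hi (sdiff_subset hj) h

theorem disjoint_image_sdiff_image_tiedIndices (s : Finset ι) (f : ι → α) :
    Disjoint ((s \ tiedIndices s f).image f) ((tiedIndices s f).image f) := by
  simp only [disjoint_left, mem_image]
  rintro _ ⟨i, hi, rfl⟩ ⟨j, hj, hji⟩
  obtain rfl := eq_of_apply_eq_of_mem_sdiff_tiedIndices hi (tiedIndices_subset s f hj) hji.symm
  exact (mem_sdiff.mp hi).2 hj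

theorem card_image_eq_card_sdiff_add_card_image_tiedIndices (s : Finset ι) (f : ι → α) :
    #(s.image f) = #(s \ tiedIndices s f) + #((tiedIndices s f).image f) := by
  calc #(s.image f)
      = #((s \ tiedIndices s f).image f ∪ (tiedIndices s f).image f) := by
        rw [← image_union, sdiff_union_of_subset (tiedIndices_subset s f)]
    _ = #((s \ tiedIndices s f).image f) + #((tiedIndices s f).image f) :=
        card_union_of_disjoint (disjoint_image_sdiff_image_tiedIndices s f)
    _ = #(s \ tiedIndices s f) + #((tiedIndices s f).image f) := by
        rw [card_image_of_injOn (injOn_sdiff_tiedIndices s f)]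

theorem card_tiedIndices (s : Finset ι) (f : ι → α) :
    #(tiedIndices s f) = collisionCount s f + #((tiedIndices s f).image f) := by
  have hsplit : #(s \ tiedIndices s f) + #(tiedIndices s f) = #s :=
    card_sdiff_add_card_eq_card (tiedIndices_subset s f)
  have himage := card_image_eq_card_sdiff_add_card_image_tiedIndices s f
  have hle : #((tiedIndices s f).image f) ≤ #(tiedIndices s f) := card_image_le
  rw [collisionCount]
  omega

theorem two_mul_card_image_tiedIndices_le (s : Finset ι) (f : ι → α) :
    2 * #((tiedIndices s f).image f) ≤ #(tiedIndices s f) := by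
  refine mul_card_image_le_card _ 2 fun a ha => ?_
  obtain ⟨i, hi, rfl⟩ := mem_image.mp ha
  obtain ⟨his, j, hjs, hne, hji⟩ := mem_tiedIndices.mp hi
  have hj : j ∈ tiedIndices s f := mem_tiedIndices.mpr ⟨hjs, i, his, hne.symm, hji.symm⟩
  exact one_lt_card.mpr ⟨i, mem_filter.mpr ⟨hi, rfl⟩, j, mem_filter.mpr ⟨hj, hji⟩, hne.symm⟩

theorem card_tiedIndices_le_two_mul_collisionCount (s : Finset ι) (f : ι → α) :
    #(tiedIndices s f) ≤ 2 * collisionCount s f := by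
  have hcard := card_tiedIndices s f
  have htwo := two_mul_card_image_tiedIndices_le s f
  omega

theorem collisionCount_lt_card_tiedIndices (h : 0 < collisionCount s f) :
    collisionCount s f < #(tiedIndices s f) := by
  have hcard := card_tiedIndices s f
  have htied : (tiedIndices s f).Nonempty := card_pos.mp (by omega)
  have himage : 0 < #((tiedIndices s f).image f) := (htied.image f).card_pos
  omega

theorem stmt13_general (s : Finset ι) (f : ι → α) :
    (1 ≤ collisionCount s f → collisionCount s f + 1 ≤ #(tiedIndices s f) ∧
      #(tiedIndices s f) ≤ 2 * collisionCount s f) ∧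
    (collisionCount s f = 0 → #(tiedIndices s f) = 0) := by
  have hle := card_tiedIndices_le_two_mul_collisionCount s f
  exact ⟨fun h => ⟨collisionCount_lt_card_tiedIndices h, hle⟩, fun h => by omega⟩

end Ties

/-- For `f : Fin n → α` (`n` positive, `α` with decidable equality), let
`C = n - |image f|` be the number of collisions of `f` and let `T` be the number of
indices `i : Fin n` whose value `f i` is attained at least twice (equivalently,
`∃ j ≠ i, f j = f i`). If `C ≥ 1` then `C + 1 ≤ T ≤ 2 * C`; moreover `C = 0`
implies `T = 0`. -/
theorem stmt13 (n : ℕ) (hn : 0 < n) {α : Type*} [DecidableEq α] (f : Fin n → α)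
    (C T : ℕ) (hC : C = n - (Finset.univ.image f).card)
    (hT : T = (Finset.univ.filter (fun i : Fin n => ∃ j : Fin n, j ≠ i ∧ f j = f i)).card) :
    (1 ≤ C → C + 1 ≤ T ∧ T ≤ 2 * C) ∧ (C = 0 → T = 0) := by
  subst hC hT
  simpa [collisionCount, tiedIndices] using stmt13_general univ f
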